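/- There exists a constant C depending only on d such that the following holds: for every finite family O of n bounded nonempty objects in ℝ^d with density ρ and every integer 1 ≤ k ≤ n, there exists a (d−1)-dimensional sphere S in ℝ^d such that (i) at most C·(ρ + ρ^{1/d}·k^{1−1/d}) objects of O intersect S, (ii) at most C·k objects of O lie strictly inside S, and (iii) at least k − C·(ρ + ρ^{1/d}·k^{1−1/d}) objects of O lie strictly inside S. -/

import Mathlib

/-- A finite family `O` of subsets of `ℝ^d` has density at most `ρ` if every bounded
subset `b` of `ℝ^d` intersects at most `ρ` members of `O` whose diameter is at least
the diameter of `b`. -/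
def FamilyDensityLE (d : ℕ) (O : Set (Set (EuclideanSpace ℝ (Fin d)))) (ρ : ℝ) : Prop :=
  ∀ b : Set (EuclideanSpace ℝ (Fin d)), Bornology.IsBounded b →
    ({o ∈ O | (o ∩ b).Nonempty ∧ Metric.diam b ≤ Metric.diam o}.ncard : ℝ) ≤ ρ

/-!
Pick one point in each object and a ball of radius `r` containing `m = 2k` of these points, whose
radius is minimal up to a factor `2`. A packing argument shows that the ball of radius `3r` about
the same centre contains `O(m)` of the points. Move the radius `R` through `[r, 2r]`: a small
object, of diameter `δ < r`, is cut only for `R` in an interval of length `δ`, so some `R` cuts at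
most `∑ δ / r` small objects. The density bounds the number of objects of diameter at least `ε r`
by `O(ρ / ε ^ d)`, a weak `ℓ^d` bound on the diameters, whence `∑ δ / r = O(ρ^(1/d) m^(1-1/d))`;
with `ε = 1` it also bounds the number of large objects that are cut. A disconnected object may
have points on both sides of a sphere without meeting it, so all straddling objects count as cut.

The weak `ℓ^1` bound available in dimension one does not control a sum, so the exponent `2` is used
there instead. The resulting error `O(ρ + √(ρ k))` in the number of enclosed objects is absorbed by
AM-GM into the difference between `m = 2k` and `k`, and a sphere, being at most two points, meets
at most `2ρ` objects.
-/

section Counting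

open Finset MeasureTheory

theorem card_le_card_mul_of_forall_exists {ι β : Type*} {G : Finset ι} {T : Finset β}
    {q : ι → β → Prop} [∀ b, DecidablePred (q · b)] {B : ℝ} (hq : ∀ i ∈ G, ∃ b ∈ T, q i b)
    (hB : ∀ b ∈ T, (#{i ∈ G | q i b} : ℝ) ≤ B) : (#G : ℝ) ≤ #T * B := by
  classical
  have hpos : ∀ i ∈ G, (1 : ℝ) ≤ #(T.bipartiteAbove q i) := fun i hi ↦ by
    obtain ⟨b, hb, hib⟩ := hq i hi
    exact_mod_cast card_pos.mpr ⟨b, mem_bipartiteAbove q |>.mpr ⟨hb, hib⟩⟩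
  simpa using card_nsmul_le_card_nsmul q hpos hB

theorem exists_mem_card_filter_mul_measureReal_le {α ι : Type*} [MeasurableSpace α]
    {μ : Measure α} {s : Set α} (hs₀ : μ s ≠ 0) (hs : μ s ≠ ⊤) (F : Finset ι) {A : ι → Set α}
    [∀ x, DecidablePred fun i ↦ x ∈ A i] (hA : ∀ i ∈ F, MeasurableSet (A i)) :
    ∃ x ∈ s, #{i ∈ F | x ∈ A i} * μ.real s ≤ ∑ i ∈ F, μ.real (s ∩ A i) := by
  have hint : ∀ i ∈ F, IntegrableOn ((A i).indicator (1 : α → ℝ)) s μ := fun i hi ↦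
    IntegrableOn.indicator (integrableOn_const hs) (hA i hi)
  obtain ⟨x, hx, hle⟩ := exists_le_setAverage hs₀ hs (integrable_finsetSum F hint)
  refine ⟨x, hx, ?_⟩
  have hs_pos : 0 < μ.real s := ENNReal.toReal_pos hs₀ hs
  calc #{i ∈ F | x ∈ A i} * μ.real s
      = (∑ i ∈ F, (A i).indicator (1 : α → ℝ) x) * μ.real s := by
        simp only [Set.indicator_apply, Pi.one_apply, sum_boole]
    _ ≤ (⨍ y in s, ∑ i ∈ F, (A i).indicator (1 : α → ℝ) y ∂μ) * μ.real s := by gcongr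
    _ = ∫ y in s, ∑ i ∈ F, (A i).indicator (1 : α → ℝ) y ∂μ := by
        rw [setAverage_eq, smul_eq_mul, inv_mul_eq_div, div_mul_cancel₀ _ hs_pos.ne']
    _ = ∑ i ∈ F, μ.real (s ∩ A i) := by
        rw [integral_finsetSum F hint]
        refine sum_congr rfl fun i hi ↦ ?_
        rw [setIntegral_indicator (hA i hi)]
        simp

theorem ncard_sep_coe_finset {α : Type*} (F : Finset α) (q : α → Prop) [DecidablePred q] :
    {a ∈ (F : Set α) | q a}.ncard = #{a ∈ F | q a} := by
  rw [← Set.ncard_coe_finset, coe_filter]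
  rfl

end Counting

section WeakType

open Finset

theorem rpow_one_sub_add_le {s x : ℝ} (hs₀ : 0 ≤ s) (hs₁ : s ≤ 1) (hx : 0 ≤ x) :
    x ^ (1 - s) + (1 - s) * (x + 1) ^ (-s) ≤ (x + 1) ^ (1 - s) := by
  have hx1 : 0 < x + 1 := by linarith
  have amgm : x ^ (1 - s) * (x + 1) ^ s ≤ x + s :=
    (Real.geom_mean_le_arith_mean2_weighted (sub_nonneg.mpr hs₁) hs₀ hx hx1.le
      (sub_add_cancel 1 s)).trans_eq (by ring)
  have hcancel : (x + 1) ^ s * (x + 1) ^ (-s) = 1 := by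
    rw [← Real.rpow_add hx1, add_neg_cancel, Real.rpow_zero]
  calc x ^ (1 - s) + (1 - s) * (x + 1) ^ (-s)
      = x ^ (1 - s) * (x + 1) ^ s * (x + 1) ^ (-s) + (1 - s) * (x + 1) ^ (-s) := by
        rw [mul_assoc, hcancel, mul_one]
    _ ≤ (x + s) * (x + 1) ^ (-s) + (1 - s) * (x + 1) ^ (-s) := by gcongr
    _ = (x + 1) * (x + 1) ^ (-s) := by ring
    _ = (x + 1) ^ (1 - s) := by rw [sub_eq_add_neg, Real.rpow_add hx1, Real.rpow_one]

theorem le_rpow_mul_rpow_neg_of_mul_rpow_le {x p K n : ℝ} (hx : 0 ≤ x) (hp : 0 < p) (hn : 0 < n)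
    (h : n * x ^ p ≤ K) : x ≤ K ^ (1 / p) * n ^ (-(1 / p)) := by
  have hK : 0 ≤ K := le_trans (by positivity) h
  calc x = (x ^ p) ^ (1 / p) := by rw [one_div, Real.rpow_rpow_inv hx hp.ne']
    _ ≤ (K / n) ^ (1 / p) := by
      gcongr
      rwa [le_div_iff₀' hn]
    _ = K ^ (1 / p) * n ^ (-(1 / p)) := by
      rw [Real.div_rpow hK hn.le, Real.rpow_neg hn.le, div_eq_mul_inv]

-- A weak `ℓ^p` bound on `w` controls its `ℓ¹` norm: the `n`-th largest weight is at most
-- `(K / n) ^ (1 / p)`.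
theorem sum_le_of_forall_card_filter_mul_rpow_le {ι : Type*} {p K : ℝ} (hp : 1 ≤ p) (hK : 0 ≤ K)
    {F : Finset ι} {w : ι → ℝ} (hw : ∀ i ∈ F, 0 ≤ w i)
    (h : ∀ i ∈ F, #{j ∈ F | w i ≤ w j} * w i ^ p ≤ K) :
    (1 - 1 / p) * ∑ i ∈ F, w i ≤ K ^ (1 / p) * (#F : ℝ) ^ (1 - 1 / p) := by
  have hp₀ : 0 < p := by linarith
  have hp₁ : 1 / p ≤ 1 := (div_le_one hp₀).mpr hp
  classical
  induction F using Finset.induction_on_min_value w with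
  | empty => simp only [sum_empty, mul_zero]; positivity
  | insert i s hi hmin ih =>
    have hrest : (1 - 1 / p) * ∑ j ∈ s, w j ≤ K ^ (1 / p) * (#s : ℝ) ^ (1 - 1 / p) := by
      refine ih (fun j hj ↦ hw j (mem_insert_of_mem hj)) fun j hj ↦ le_trans ?_
        (h j (mem_insert_of_mem hj))
      have := hw j (mem_insert_of_mem hj)
      gcongr
      exact subset_insert i s
    have hall : {j ∈ insert i s | w i ≤ w j} = insert i s :=
      filter_true_of_mem ((forall_mem_insert ..).mpr ⟨le_rfl, hmin⟩)
    have hwi := hw i (mem_insert_self i s)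
    have hi_pow := h i (mem_insert_self i s)
    rw [hall, card_insert_of_notMem hi] at hi_pow
    push_cast at hi_pow
    have hmin_le : w i ≤ K ^ (1 / p) * ((#s : ℝ) + 1) ^ (-(1 / p)) :=
      le_rpow_mul_rpow_neg_of_mul_rpow_le hwi hp₀ (by positivity) hi_pow
    rw [sum_insert hi, card_insert_of_notMem hi, Nat.cast_add_one]
    calc (1 - 1 / p) * (w i + ∑ j ∈ s, w j)
        ≤ (1 - 1 / p) * (K ^ (1 / p) * ((#s : ℝ) + 1) ^ (-(1 / p)))
            + K ^ (1 / p) * (#s : ℝ) ^ (1 - 1 / p) := by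
          rw [mul_add]
          gcongr
      _ = K ^ (1 / p) * ((#s : ℝ) ^ (1 - 1 / p) + (1 - 1 / p) * ((#s : ℝ) + 1) ^ (-(1 / p))) := by
          ring
      _ ≤ K ^ (1 / p) * ((#s : ℝ) + 1) ^ (1 - 1 / p) := by
          gcongr
          exact rpow_one_sub_add_le (by positivity) hp₁ (by positivity)

end WeakType

section MetricSpace

open Finset Metric

variable {E : Type*} [PseudoMetricSpace E]

open Classical in
theorem exists_closedBall_card_ge_forall_card_lt {ι : Type*} {F : Finset ι} {p : ι → E} {m : ℕ}
    (hm : 0 < m) (hmF : m ≤ #F) (hp : ∀ i ∈ F, #{j ∈ F | p j ∈ closedBall (p i) 0} < m) :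
    ∃ (c : E) (r : ℝ), 0 < r ∧ m ≤ #{i ∈ F | p i ∈ closedBall c r} ∧
      ∀ c' : E, ∀ r' < r / 2, #{i ∈ F | p i ∈ closedBall c' r'} < m := by
  -- Up to a factor `2` in the radius, a ball holding `m` of the points may be centred at one of
  -- them and have another on its boundary, which leaves finitely many balls to compare.
  set P : Finset (ι × ι) :=
    {a ∈ F ×ˢ F | m ≤ #{l ∈ F | p l ∈ closedBall (p a.1) (dist (p a.2) (p a.1))}}
  have exists_pair : ∀ G ⊆ F, m ≤ #G → ∃ a ∈ P, a.1 ∈ G ∧ a.2 ∈ G := fun G hG hmG ↦ by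
    obtain ⟨i, hi⟩ := card_pos.mp (hm.trans_le hmG)
    obtain ⟨j, hj, hmax⟩ := G.exists_max_image (fun l ↦ dist (p l) (p i)) ⟨i, hi⟩
    refine ⟨(i, j), mem_filter.mpr ⟨mk_mem_product (hG hi) (hG hj), hmG.trans ?_⟩, hi, hj⟩
    exact card_le_card fun l hl ↦ mem_filter.mpr ⟨hG hl, hmax l hl⟩
  obtain ⟨a₀, ha₀, -⟩ := exists_pair F subset_rfl hmF
  obtain ⟨a, ha, hmin⟩ := P.exists_min_image (fun a ↦ dist (p a.2) (p a.1)) ⟨a₀, ha₀⟩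
  obtain ⟨haF, hma⟩ := mem_filter.mp ha
  refine ⟨p a.1, dist (p a.2) (p a.1), dist_nonneg.lt_of_ne fun h0 ↦ ?_, hma, fun c' r' hr' ↦ ?_⟩
  · rw [← h0] at hma
    exact (hp a.1 (mem_product.mp haF).1).not_ge hma
  · by_contra! hmG
    obtain ⟨b, hb, hb₁, hb₂⟩ := exists_pair _ (filter_subset _ _) hmG
    have hb₁' : dist (p b.1) c' ≤ r' := (mem_filter.mp hb₁).2
    have hb₂' : dist (p b.2) c' ≤ r' := (mem_filter.mp hb₂).2
    linarith [hmin b hb, dist_triangle_right (p b.2) (p b.1) c']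

/-- A set straddles the sphere of centre `c` and radius `R` if it meets the closed ball without
lying inside the open one. A connected set straddles a sphere of a normed space iff it meets it,
but a disconnected set may straddle it without meeting it. -/
def Straddles (o : Set E) (c : E) (R : ℝ) : Prop :=
  (o ∩ closedBall c R).Nonempty ∧ ¬ o ⊆ ball c R

theorem Straddles.of_nonempty_inter_sphere {o : Set E} {c : E} {R : ℝ}
    (h : (o ∩ sphere c R).Nonempty) : Straddles o c R := by
  obtain ⟨x, hxo, hx⟩ := h
  exact ⟨⟨x, hxo, sphere_subset_closedBall hx⟩, fun hsub ↦ (hsub hxo).ne hx⟩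

theorem Straddles.radius_mem_Icc {o : Set E} {c : E} {R : ℝ} (h : Straddles o c R)
    (ho : Bornology.IsBounded o) : R ∈ Set.Icc (infDist c o) (infDist c o + diam o) := by
  obtain ⟨⟨x, hxo, hx⟩, hsub⟩ := h
  obtain ⟨y, hyo, hy⟩ := Set.not_subset.mp hsub
  refine ⟨(infDist_le_dist_of_mem hxo).trans (by rwa [dist_comm]), ?_⟩
  suffices R - diam o ≤ infDist c o by linarith
  refine (le_infDist ⟨x, hxo⟩).mpr fun z hz ↦ ?_
  have hRy : R ≤ dist y c := not_lt.mp hy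
  linarith [dist_le_diam_of_mem ho hyo hz, dist_triangle y z c, dist_comm c z]

open Classical in
theorem exists_radius_card_straddles_mul_le {F : Finset (Set E)}
    (hF : ∀ o ∈ F, Bornology.IsBounded o) (c : E) {r : ℝ} (hr : 0 < r) :
    ∃ R ∈ Set.Icc r (2 * r), #{o ∈ F | Straddles o c R} * r ≤ ∑ o ∈ F, diam o := by
  have hvol : MeasureTheory.volume.real (Set.Icc r (2 * r)) = r := by
    rw [Real.volume_real_Icc_of_le (by linarith)]; ring
  obtain ⟨R, hR, hle⟩ := exists_mem_card_filter_mul_measureReal_le (μ := MeasureTheory.volume)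
    (s := Set.Icc r (2 * r)) (by simp [two_mul, hr]) (by simp) F
    (fun o _ ↦ measurableSet_Icc (a := infDist c o) (b := infDist c o + diam o))
  rw [hvol] at hle
  refine ⟨R, hR, le_trans ?_ (hle.trans (sum_le_sum fun o _ ↦ ?_))⟩
  · gcongr with o ho
    exact fun h ↦ h.radius_mem_Icc (hF o ho)
  · calc _ ≤ MeasureTheory.volume.real (Set.Icc (infDist c o) (infDist c o + diam o)) :=
          MeasureTheory.measureReal_mono Set.inter_subset_right (by simp)
      _ = diam o := by rw [Real.volume_real_Icc_of_le (by linarith [diam_nonneg (s := o)])]; ring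

theorem Straddles.subset_closedBall {o : Set E} {c : E} {R r : ℝ} (h : Straddles o c R)
    (ho : Bornology.IsBounded o) (hr : diam o ≤ r) : o ⊆ closedBall c (R + r) := by
  obtain ⟨x, hxo, hx⟩ := h.1
  intro y hy
  rw [mem_closedBall] at hx ⊢
  linarith [dist_le_diam_of_mem ho hy hxo, dist_triangle y x c]

open Classical in
theorem card_filter_straddles_le {F : Finset (Set E)} (hF : ∀ o ∈ F, Bornology.IsBounded o)
    {c : E} {R r R' : ℝ} (hr : 0 ≤ r) (hR' : R + r ≤ R') :
    #{o ∈ F | Straddles o c R} ≤ #{o ∈ F | (o ∩ closedBall c R').Nonempty ∧ r ≤ diam o} +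
      #{o ∈ F | (o ⊆ closedBall c R' ∧ o.Nonempty ∧ diam o ≤ r) ∧ Straddles o c R} := by
  refine le_trans (card_le_card fun o ho ↦ ?_) (card_union_le _ _)
  obtain ⟨hoF, hstr⟩ := mem_filter.mp ho
  rw [← filter_or, mem_filter]
  refine ⟨hoF, (le_total r (diam o)).imp (fun hbig ↦ ⟨?_, hbig⟩)
    fun hsmall ↦ ⟨⟨?_, ?_, hsmall⟩, hstr⟩⟩
  · exact hstr.1.mono
      (Set.inter_subset_inter_right o (closedBall_subset_closedBall (by linarith)))
  · exact (hstr.subset_closedBall (hF o hoF) hsmall).trans (closedBall_subset_closedBall hR')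
  · exact hstr.1.mono Set.inter_subset_left

/-- The density of a finite family of objects is at most `ρ`; this is `FamilyDensityLE` in an
arbitrary metric space. -/
def HasDensityLE (O : Set (Set E)) (ρ : ℝ) : Prop :=
  ∀ b : Set E, Bornology.IsBounded b →
    ({o ∈ O | (o ∩ b).Nonempty ∧ diam b ≤ diam o}.ncard : ℝ) ≤ ρ

theorem HasDensityLE.nonneg {O : Set (Set E)} {ρ : ℝ} (h : HasDensityLE O ρ) : 0 ≤ ρ :=
  (Nat.cast_nonneg _).trans (h ∅ Bornology.isBounded_empty)

open Classical in
theorem HasDensityLE.card_filter_le {F : Finset (Set E)} {ρ : ℝ}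
    (h : HasDensityLE (F : Set (Set E)) ρ) {b : Set E} (hb : Bornology.IsBounded b) :
    (#{o ∈ F | (o ∩ b).Nonempty ∧ diam b ≤ diam o} : ℝ) ≤ ρ := by
  rw [← ncard_sep_coe_finset]
  exact h b hb

open Classical in
theorem HasDensityLE.card_filter_closedBall_le {F : Finset (Set E)} {ρ δ : ℝ}
    (h : HasDensityLE (F : Set (Set E)) ρ) (hδ : 0 ≤ δ) (t : E) :
    (#{o ∈ F | (o ∩ closedBall t δ).Nonempty ∧ 2 * δ ≤ diam o} : ℝ) ≤ ρ := by
  refine le_trans ?_ (h.card_filter_le (isBounded_closedBall (x := t) (r := δ)))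
  gcongr
  exact diam_closedBall hδ

/-- The sphere of centre `c` and radius `R` separates about `k` of the objects of `O` from the
rest with error `e`, up to the constant `C`: it meets at most `C * e` objects, and the number of
objects strictly inside it lies between `k - C * e` and `C * k`. -/
structure IsSphereSeparator (O : Set (Set E)) (C k e : ℝ) (c : E) (R : ℝ) : Prop where
  radius_pos : 0 < R
  ncard_inter_le : ({o ∈ O | (o ∩ sphere c R).Nonempty}.ncard : ℝ) ≤ C * e
  ncard_subset_le : ({o ∈ O | o ⊆ ball c R}.ncard : ℝ) ≤ C * k
  le_ncard_subset : k - C * e ≤ ({o ∈ O | o ⊆ ball c R}.ncard : ℝ)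

theorem IsSphereSeparator.mono {O : Set (Set E)} {C C' k e R : ℝ} {c : E}
    (h : IsSphereSeparator O C k e c R) (hC : C ≤ C') (hk : 0 ≤ k) (he : 0 ≤ e) :
    IsSphereSeparator O C' k e c R where
  radius_pos := h.radius_pos
  ncard_inter_le := h.ncard_inter_le.trans (by gcongr)
  ncard_subset_le := h.ncard_subset_le.trans (by gcongr)
  le_ncard_subset := le_trans (by gcongr) h.le_ncard_subset

theorem exists_forall_subset_ball {F : Finset (Set E)} (hF : ∀ o ∈ F, Bornology.IsBounded o)
    (c : E) : ∃ R > 0, ∀ o ∈ F, o ⊆ ball c R := by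
  obtain ⟨R, hR, hsub⟩ :=
    ((Bornology.isBounded_biUnion_finset F).mpr hF).subset_ball_lt 0 c
  exact ⟨R, hR, fun o ho ↦ (Set.subset_biUnion_of_mem (u := id) ho).trans hsub⟩

theorem exists_isSphereSeparator_of_card_le_mul {F : Finset (Set E)}
    (hbdd : ∀ o ∈ F, Bornology.IsBounded o) (c : E) {C k e : ℝ} (hC : 0 ≤ C) (he : 0 ≤ e)
    (hkF : k ≤ #F) (hFk : #F ≤ C * k) : ∃ R, IsSphereSeparator (F : Set (Set E)) C k e c R := by
  obtain ⟨R, hR, hball⟩ := exists_forall_subset_ball hbdd c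
  have hCe : 0 ≤ C * e := mul_nonneg hC he
  have hinter : {o ∈ (F : Set (Set E)) | (o ∩ sphere c R).Nonempty} = ∅ :=
    Set.sep_eq_empty_iff_mem_false.mpr fun o ho ⟨x, hxo, hx⟩ ↦ (hball o ho hxo).ne hx
  have hsub : {o ∈ (F : Set (Set E)) | o ⊆ ball c R} = F := Set.sep_eq_self_iff_mem_true.mpr hball
  refine ⟨R, hR, ?_, ?_, ?_⟩
  · simpa only [hinter, Set.ncard_empty, Nat.cast_zero] using hCe
  · rwa [hsub, Set.ncard_coe_finset]
  · rw [hsub, Set.ncard_coe_finset]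
    linarith

end MetricSpace

section NormedSpace

open Finset Metric MeasureTheory Module
open scoped NNReal

theorem packingNumber_ne_top_of_totallyBounded {X : Type*} [PseudoEMetricSpace X] {A : Set X}
    (hA : TotallyBounded A) {ε : ℝ≥0} (hε : ε ≠ 0) : packingNumber ε A ≠ ⊤ := by
  obtain ⟨N, -, hN, hcover⟩ := exists_finite_isCover_of_totallyBounded (half_pos hε.bot_lt).ne' hA
  rw [← mul_div_cancel₀ ε (two_ne_zero' ℝ≥0)]
  exact ((packingNumber_two_mul_le_externalCoveringNumber _ A).trans_lt
    (hcover.externalCoveringNumber_le_encard.trans_lt hN.encard_lt_top)).ne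

variable {E : Type*} [NormedAddCommGroup E] [NormedSpace ℝ E]

theorem card_mul_pow_finrank_le_of_isSeparated [FiniteDimensional ℝ E] {T : Finset E} {c : E}
    {R : ℝ} {δ : ℝ≥0} (hR : 0 ≤ R) (hT : ∀ t ∈ T, t ∈ closedBall c R)
    (hsep : IsSeparated δ (T : Set E)) :
    #T * (δ / 2 : ℝ) ^ finrank ℝ E ≤ (R + δ / 2) ^ finrank ℝ E := by
  borelize E
  let μ : Measure E := Measure.addHaar
  have hdisj : Set.PairwiseDisjoint (T : Set E) fun t ↦ closedBall t (δ / 2 : ℝ) :=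
    fun x hx y hy hxy ↦ closedBall_disjoint_closedBall <| by
      have hlt : (δ : ENNReal) < edist x y := hsep hx hy hxy
      rw [edist_nndist, ENNReal.coe_lt_coe, ← NNReal.coe_lt_coe, coe_nndist] at hlt
      linarith
  have hsub : ⋃ t ∈ T, closedBall t (δ / 2 : ℝ) ⊆ closedBall c (R + δ / 2) :=
    Set.iUnion₂_subset fun t ht ↦
      closedBall_subset_closedBall' (by linarith [mem_closedBall.mp (hT t ht)])
  have hunit : 0 < μ.real (closedBall (0 : E) 1) :=
    ENNReal.toReal_pos (measure_closedBall_pos μ 0 one_pos).ne' measure_closedBall_lt_top.ne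
  refine le_of_mul_le_mul_right ?_ hunit
  calc #T * (δ / 2 : ℝ) ^ finrank ℝ E * μ.real (closedBall (0 : E) 1)
      = ∑ t ∈ T, μ.real (closedBall t (δ / 2 : ℝ)) := by
        simp only [μ.addHaar_real_closedBall' _ (by positivity : (0 : ℝ) ≤ δ / 2), sum_const,
          nsmul_eq_mul, mul_assoc]
    _ = μ.real (⋃ t ∈ T, closedBall t (δ / 2 : ℝ)) :=
        (measureReal_biUnion_finset hdisj (fun t _ ↦ measurableSet_closedBall)
          fun t _ ↦ measure_closedBall_lt_top.ne).symm
    _ ≤ μ.real (closedBall c (R + δ / 2)) := measureReal_mono hsub measure_closedBall_lt_top.ne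
    _ = (R + δ / 2) ^ finrank ℝ E * μ.real (closedBall (0 : E) 1) :=
        μ.addHaar_real_closedBall' _ (by positivity)

theorem exists_finset_closedBall_subset_biUnion_closedBall [FiniteDimensional ℝ E] (c : E)
    {R δ : ℝ} (hδ : 0 < δ) (hδR : δ ≤ R) :
    ∃ T : Finset E, (#T : ℝ) ≤ (3 * R / δ) ^ finrank ℝ E ∧
      closedBall c R ⊆ ⋃ t ∈ T, closedBall t δ := by
  lift δ to ℝ≥0 using hδ.le
  have hpack : packingNumber δ (closedBall c R) ≠ ⊤ :=
    packingNumber_ne_top_of_totallyBounded (isCompact_closedBall c R).totallyBounded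
      (by exact_mod_cast hδ.ne')
  obtain ⟨T, hT⟩ : ∃ T : Finset E, (T : Set E) = maximalSeparatedSet δ (closedBall c R) :=
    (Set.encard_ne_top_iff.mp (encard_maximalSeparatedSet hpack ▸ hpack)).exists_finset_coe
  have hvol := card_mul_pow_finrank_le_of_isSeparated (hδ.le.trans hδR)
    (fun t ht ↦ maximalSeparatedSet_subset (hT ▸ mem_coe.mpr ht))
    (hT ▸ isSeparated_maximalSeparatedSet)
  have hcover := (isCover_maximalSeparatedSet hpack).subset_iUnion_closedBall
  rw [← hT] at hcover
  refine ⟨T, ?_, by simpa only [mem_coe] using hcover⟩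
  have hR : 0 ≤ R := hδ.le.trans hδR
  calc (#T : ℝ) ≤ ((R + δ / 2) / (δ / 2)) ^ finrank ℝ E := by
        rwa [div_pow, le_div_iff₀ (by positivity)]
    _ ≤ (3 * R / δ) ^ finrank ℝ E := by
        refine pow_le_pow_left₀ (by positivity) ?_ _
        rw [div_le_div_iff₀ (by positivity) hδ]
        nlinarith

open Classical in
theorem card_le_of_forall_card_filter_closedBall_le [FiniteDimensional ℝ E] {ι : Type*}
    {G : Finset ι} {s : ι → Set E} {c : E} {R δ B : ℝ} (hδ : 0 < δ) (hδR : δ ≤ R)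
    (hG : ∀ i ∈ G, (s i ∩ closedBall c R).Nonempty)
    (hB : ∀ t, (#{i ∈ G | (s i ∩ closedBall t δ).Nonempty} : ℝ) ≤ B) :
    (#G : ℝ) ≤ (3 * R / δ) ^ finrank ℝ E * B := by
  have hB₀ : 0 ≤ B := (Nat.cast_nonneg _).trans (hB c)
  obtain ⟨T, hT, hcover⟩ := exists_finset_closedBall_subset_biUnion_closedBall c hδ hδR
  have hmeet : ∀ i ∈ G, ∃ t ∈ T, (s i ∩ closedBall t δ).Nonempty := fun i hi ↦ by
    obtain ⟨x, hx, hxc⟩ := hG i hi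
    obtain ⟨t, ht, hxt⟩ := Set.mem_iUnion₂.mp (hcover hxc)
    exact ⟨t, ht, x, hx, hxt⟩
  exact (card_le_card_mul_of_forall_exists hmeet fun t _ ↦ hB t).trans (by gcongr)

theorem HasDensityLE.card_le [FiniteDimensional ℝ E] {F : Finset (Set E)} {ρ : ℝ}
    (h : HasDensityLE (F : Set (Set E)) ρ) {G : Finset (Set E)} (hGF : G ⊆ F) {c : E} {R δ : ℝ}
    (hδ : 0 < δ) (hδR : δ ≤ 2 * R)
    (hG : ∀ o ∈ G, (o ∩ closedBall c R).Nonempty ∧ δ ≤ diam o) :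
    (#G : ℝ) ≤ (6 * R / δ) ^ finrank ℝ E * ρ := by
  classical
  have hcount := card_le_of_forall_card_filter_closedBall_le (s := id) (B := ρ) (half_pos hδ)
    (by linarith) (fun o ho ↦ (hG o ho).1) fun t ↦ ?_
  · rwa [show 3 * R / (δ / 2) = 6 * R / δ by field_simp; ring] at hcount
  · refine le_trans ?_ (h.card_filter_closedBall_le (half_pos hδ).le t)
    gcongr ((#?_ : ℕ) : ℝ)
    intro o ho
    obtain ⟨hoG, hmeet⟩ := mem_filter.mp ho
    exact mem_filter.mpr ⟨hGF hoG, hmeet, by linarith [(hG o hoG).2]⟩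

theorem HasDensityLE.sum_diam_le [FiniteDimensional ℝ E] {F : Finset (Set E)} {ρ : ℝ}
    (h : HasDensityLE (F : Set (Set E)) ρ) {S : Finset (Set E)} (hSF : S ⊆ F) {c : E}
    {r R p : ℝ} (hr : 0 < r) (hrR : r ≤ 2 * R) (hp₁ : 1 ≤ p) (hp : finrank ℝ E ≤ p)
    (hS : ∀ o ∈ S, (o ∩ closedBall c R).Nonempty ∧ diam o ≤ r) :
    (1 - 1 / p) * ∑ o ∈ S, diam o ≤
      ((6 * R / r) ^ finrank ℝ E * ρ) ^ (1 / p) * (#S : ℝ) ^ (1 - 1 / p) * r := by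
  have hρ := h.nonneg
  have hR : 0 < R := by linarith
  rw [← div_le_iff₀ hr, mul_div_assoc, sum_div]
  refine sum_le_of_forall_card_filter_mul_rpow_le hp₁ (by positivity)
    (fun o _ ↦ div_nonneg diam_nonneg hr.le) fun o ho ↦ ?_
  obtain hdiam | hdiam := (diam_nonneg (s := o)).eq_or_lt
  · rw [← hdiam, zero_div, Real.zero_rpow (by linarith), mul_zero]
    positivity
  · have hcard : (#{o' ∈ S | diam o / r ≤ diam o' / r} : ℝ) ≤ (6 * R / diam o) ^ finrank ℝ E * ρ :=
      h.card_le ((filter_subset _ S).trans hSF) hdiam ((hS o ho).2.trans hrR) fun o' ho' ↦ by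
        obtain ⟨ho'S, hle⟩ := mem_filter.mp ho'
        exact ⟨(hS o' ho'S).1, (div_le_div_iff_of_pos_right hr).mp hle⟩
    have hpow : (diam o / r) ^ p ≤ (diam o / r) ^ finrank ℝ E := by
      rw [← Real.rpow_natCast]
      exact Real.rpow_le_rpow_of_exponent_ge (by positivity) ((div_le_one hr).mpr (hS o ho).2) hp
    calc #{o' ∈ S | diam o / r ≤ diam o' / r} * (diam o / r) ^ p
        ≤ (6 * R / diam o) ^ finrank ℝ E * ρ * (diam o / r) ^ finrank ℝ E := by gcongr
      _ = (6 * R / diam o * (diam o / r)) ^ finrank ℝ E * ρ := by rw [mul_pow]; ring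
      _ = (6 * R / r) ^ finrank ℝ E * ρ := by rw [div_mul_div_cancel₀ hdiam.ne']

open Classical in
theorem HasDensityLE.exists_radius_card_straddles_le [FiniteDimensional ℝ E]
    {F : Finset (Set E)} {ρ : ℝ} (h : HasDensityLE (F : Set (Set E)) ρ)
    (hbdd : ∀ o ∈ F, Bornology.IsBounded o) (c : E) {r p : ℝ} (hr : 0 < r) (hp₂ : 2 ≤ p)
    (hp : finrank ℝ E ≤ p) :
    ∃ R ∈ Set.Icc r (2 * r), (#{o ∈ F | Straddles o c R} : ℝ) ≤ 18 ^ finrank ℝ E * ρ +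
      2 * ((18 ^ finrank ℝ E * ρ) ^ (1 / p) *
        (#{o ∈ F | o ⊆ closedBall c (3 * r)} : ℝ) ^ (1 - 1 / p)) := by
  have hρ := h.nonneg
  have hp_half : 1 / p ≤ 1 / 2 := one_div_le_one_div_of_le two_pos hp₂
  have hratio : 6 * (3 * r) / r = 18 := by field_simp; norm_num
  set S : Finset (Set E) := {o ∈ F | o ⊆ closedBall c (3 * r) ∧ o.Nonempty ∧ diam o ≤ r}
    with hS
  obtain ⟨R, hR, hsmall⟩ := exists_radius_card_straddles_mul_le (F := S)
    (fun o ho ↦ hbdd o (mem_filter.mp ho).1) c hr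
  have hsum := h.sum_diam_le (filter_subset _ _) hr (R := 3 * r) (by linarith) (by linarith) hp
    (S := S) (c := c) fun o ho ↦ by
      obtain ⟨-, hsub, hne, hdiam⟩ := mem_filter.mp ho
      exact ⟨by rwa [Set.inter_eq_left.mpr hsub], hdiam⟩
  rw [hratio] at hsum
  have hbig : (#{o ∈ F | (o ∩ closedBall c (3 * r)).Nonempty ∧ r ≤ diam o} : ℝ) ≤
      18 ^ finrank ℝ E * ρ := by
    rw [← hratio]
    exact h.card_le (filter_subset _ F) hr (by linarith) fun o ho ↦ (mem_filter.mp ho).2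
  have hsmall_card : (#{o ∈ S | Straddles o c R} : ℝ) ≤ 2 * ((18 ^ finrank ℝ E * ρ) ^ (1 / p) *
      (#{o ∈ F | o ⊆ closedBall c (3 * r)} : ℝ) ^ (1 - 1 / p)) := by
    refine le_of_mul_le_mul_right (hsmall.trans ?_) hr
    suffices 1 / 2 * ∑ o ∈ S, diam o ≤ (18 ^ finrank ℝ E * ρ) ^ (1 / p) *
        (#{o ∈ F | o ⊆ closedBall c (3 * r)} : ℝ) ^ (1 - 1 / p) * r by linarith
    calc 1 / 2 * ∑ o ∈ S, diam o
        ≤ (1 - 1 / p) * ∑ o ∈ S, diam o := by gcongr; linarith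
      _ ≤ (18 ^ finrank ℝ E * ρ) ^ (1 / p) * (#S : ℝ) ^ (1 - 1 / p) * r := hsum
      _ ≤ _ := by
        gcongr
        · linarith
        · exact fun o ho ↦ mem_filter.mpr ((mem_filter.mp ho).imp_right And.left)
  refine ⟨R, hR, le_trans ?_ (add_le_add hbig hsmall_card)⟩
  rw [hS, filter_filter]
  exact_mod_cast card_filter_straddles_le hbdd hr.le (by linarith [hR.2])

open Classical in
theorem HasDensityLE.exists_closedBall_card_ge [FiniteDimensional ℝ E] {F : Finset (Set E)}
    {ρ : ℝ} (h : HasDensityLE (F : Set (Set E)) ρ) (hne : ∀ o ∈ F, o.Nonempty) {m : ℕ}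
    (hρm : ρ < m) (hmF : m ≤ #F) :
    ∃ (c : E) (r : ℝ), 0 < r ∧ m ≤ #{o ∈ F | (o ∩ closedBall c r).Nonempty} ∧
      (#{o ∈ F | o ⊆ closedBall c (3 * r)} : ℝ) ≤ 36 ^ finrank ℝ E * m := by
  choose! x hx using hne
  have hm : 0 < m := by exact_mod_cast h.nonneg.trans_lt hρm
  have hmult : ∀ o ∈ F, #{o' ∈ F | x o' ∈ closedBall (x o) 0} < m := fun o _ ↦ by
    suffices (#{o' ∈ F | x o' ∈ closedBall (x o) 0} : ℝ) ≤ ρ by exact_mod_cast this.trans_lt hρm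
    refine le_trans ?_ (h.card_filter_closedBall_le le_rfl (x o))
    gcongr ((#?_ : ℕ) : ℝ)
    intro o' ho'
    obtain ⟨hF, hmem⟩ := mem_filter.mp ho'
    exact mem_filter.mpr ⟨hF, ⟨x o', hx o' hF, hmem⟩, by simpa using diam_nonneg⟩
  obtain ⟨c, r, hr, hge, hlt⟩ := exists_closedBall_card_ge_forall_card_lt hm hmF hmult
  refine ⟨c, r, hr, hge.trans (card_le_card fun o ho ↦ ?_), ?_⟩
  · obtain ⟨hF, hmem⟩ := mem_filter.mp ho
    exact mem_filter.mpr ⟨hF, x o, hx o hF, hmem⟩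
  · have hcount := card_le_of_forall_card_filter_closedBall_le (B := m) (c := c) (R := 3 * r)
      (G := {o ∈ F | o ⊆ closedBall c (3 * r)}) (s := fun o ↦ {x o}) (by positivity : 0 < r / 4)
      (by linarith) (fun o ho ↦ ?_) fun t ↦ ?_
    · rwa [show 3 * (3 * r) / (r / 4) = 36 by field_simp; norm_num] at hcount
    · obtain ⟨hF, hsub⟩ := mem_filter.mp ho
      exact ⟨x o, rfl, hsub (hx o hF)⟩
    · simp only [Set.singleton_inter_nonempty]
      have hlt' := (hlt t (r / 4) (by linarith)).le
      exact_mod_cast (card_le_card (filter_subset_filter _ (filter_subset _ F))).trans hlt'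

open Classical in
theorem HasDensityLE.exists_sphere_card_straddles_le [FiniteDimensional ℝ E]
    {F : Finset (Set E)} {ρ : ℝ} (h : HasDensityLE (F : Set (Set E)) ρ)
    (hbdd : ∀ o ∈ F, Bornology.IsBounded o) (hne : ∀ o ∈ F, o.Nonempty) {m : ℕ} (hρm : ρ < m)
    (hmF : m ≤ #F) {p : ℝ} (hp₂ : 2 ≤ p) (hp : finrank ℝ E ≤ p) :
    ∃ (c : E) (R : ℝ), 0 < R ∧ m ≤ #{o ∈ F | o ⊆ ball c R} + #{o ∈ F | Straddles o c R} ∧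
      (#{o ∈ F | o ⊆ ball c R} : ℝ) ≤ 36 ^ finrank ℝ E * m ∧
      (#{o ∈ F | Straddles o c R} : ℝ) ≤
        36 ^ finrank ℝ E * (ρ + 2 * (ρ ^ (1 / p) * (m : ℝ) ^ (1 - 1 / p))) := by
  have hρ := h.nonneg
  obtain ⟨c, r, hr, hge, hle⟩ := h.exists_closedBall_card_ge hne hρm hmF
  obtain ⟨R, hR, hstr⟩ := h.exists_radius_card_straddles_le hbdd c hr hp₂ hp
  have hexp : 0 ≤ 1 - 1 / p := by
    linarith [one_div_le_one_div_of_le two_pos hp₂]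
  refine ⟨c, R, hr.trans_le hR.1, hge.trans ?_, ?_, hstr.trans ?_⟩
  · refine le_trans (card_le_card fun o ho ↦ ?_) (card_union_le _ _)
    obtain ⟨hF, hmeet⟩ := mem_filter.mp ho
    rw [← filter_or, mem_filter]
    exact ⟨hF, or_iff_not_imp_left.mpr fun hsub ↦ ⟨hmeet.mono
      (Set.inter_subset_inter_right o (closedBall_subset_closedBall hR.1)), hsub⟩⟩
  · refine le_trans ?_ hle
    gcongr with o
    exact ball_subset_closedBall.trans (closedBall_subset_closedBall (by linarith [hR.2]))
  · set K : ℝ := 36 ^ finrank ℝ E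
    have hK : (18 : ℝ) ^ finrank ℝ E ≤ K := pow_le_pow_left₀ (by norm_num) (by norm_num) _
    calc 18 ^ finrank ℝ E * ρ + 2 * ((18 ^ finrank ℝ E * ρ) ^ (1 / p) *
          (#{o ∈ F | o ⊆ closedBall c (3 * r)} : ℝ) ^ (1 - 1 / p))
        ≤ K * ρ + 2 * ((K * ρ) ^ (1 / p) * (K * m) ^ (1 - 1 / p)) := by gcongr
      _ = K * ρ + 2 * (K ^ (1 / p) * K ^ (1 - 1 / p) *
            (ρ ^ (1 / p) * (m : ℝ) ^ (1 - 1 / p))) := by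
        rw [Real.mul_rpow (by positivity) hρ, Real.mul_rpow (by positivity) (by positivity)]
        ring
      _ = K * (ρ + 2 * (ρ ^ (1 / p) * (m : ℝ) ^ (1 - 1 / p))) := by
        rw [← Real.rpow_add (by positivity), add_sub_cancel, Real.rpow_one]
        ring

theorem exists_sphere_subset_pair_of_finrank_eq_one (hE : finrank ℝ E = 1) (c : E) (R : ℝ) :
    ∃ x y : E, sphere c R ⊆ {x, y} := by
  obtain ⟨v, hv, hspan⟩ := finrank_eq_one_iff'.mp hE
  refine ⟨(R / ‖v‖) • v + c, -(R / ‖v‖) • v + c, fun z hz ↦ ?_⟩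
  obtain ⟨a, ha⟩ := hspan (z - c)
  have habs : |a| = R / ‖v‖ := by
    rw [eq_div_iff (norm_ne_zero_iff.mpr hv), ← Real.norm_eq_abs, ← norm_smul, ha]
    exact mem_sphere_iff_norm.mp hz
  obtain rfl : z = a • v + c := by rw [ha, sub_add_cancel]
  rw [← habs]
  obtain h | h := abs_choice a <;> simp [h]

open Classical in
theorem HasDensityLE.card_inter_sphere_le_of_finrank_eq_one (hE : finrank ℝ E = 1)
    {F : Finset (Set E)} {ρ : ℝ} (h : HasDensityLE (F : Set (Set E)) ρ) (c : E) (R : ℝ) :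
    (#{o ∈ F | (o ∩ sphere c R).Nonempty} : ℝ) ≤ 2 * ρ := by
  obtain ⟨x, y, hxy⟩ := exists_sphere_subset_pair_of_finrank_eq_one hE c R
  have hmeet : ∀ o ∈ ({o ∈ F | (o ∩ sphere c R).Nonempty} : Finset _),
      ∃ t ∈ ({x, y} : Finset E), t ∈ o := fun o ho ↦ by
    obtain ⟨-, z, hzo, hz⟩ := mem_filter.mp ho
    exact ⟨z, by simpa using hxy hz, hzo⟩
  have hpoint : ∀ t ∈ ({x, y} : Finset E),
      (#{o ∈ ({o ∈ F | (o ∩ sphere c R).Nonempty} : Finset _) | t ∈ o} : ℝ) ≤ ρ := fun t _ ↦ by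
    refine le_trans ?_ (h.card_filter_closedBall_le le_rfl t)
    gcongr ((#?_ : ℕ) : ℝ)
    intro o ho
    obtain ⟨hoF, hto⟩ := mem_filter.mp ho
    exact mem_filter.mpr ⟨(mem_filter.mp hoF).1, ⟨t, hto, mem_closedBall_self le_rfl⟩,
      by simpa using diam_nonneg⟩
  refine (card_le_card_mul_of_forall_exists hmeet hpoint).trans ?_
  have := h.nonneg
  gcongr
  exact_mod_cast card_le_two

theorem exists_forall_disjoint_closedBall [Nontrivial E] {F : Finset (Set E)}
    (hF : ∀ o ∈ F, Bornology.IsBounded o) (r : ℝ) : ∃ c, ∀ o ∈ F, Disjoint o (closedBall c r) := by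
  obtain ⟨R, -, hsub⟩ := exists_forall_subset_ball hF 0
  obtain ⟨c, hc⟩ := NormedSpace.exists_lt_norm ℝ E (R + r)
  refine ⟨c, fun o ho ↦ Set.disjoint_of_subset_left (hsub o ho) ?_⟩
  exact ball_disjoint_closedBall (by rw [dist_zero_left]; exact hc.le)

theorem exists_isSphereSeparator_of_le_mul [Nontrivial E] {F : Finset (Set E)}
    (hbdd : ∀ o ∈ F, Bornology.IsBounded o) (hne : ∀ o ∈ F, o.Nonempty) {C k e : ℝ}
    (hk : 0 ≤ k) (hC : 0 ≤ C) (hke : k ≤ C * e) :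
    ∃ c R, IsSphereSeparator (F : Set (Set E)) C k e c R := by
  obtain ⟨c, hc⟩ := exists_forall_disjoint_closedBall hbdd 1
  have hinter : {o ∈ (F : Set (Set E)) | (o ∩ sphere c 1).Nonempty} = ∅ :=
    Set.sep_eq_empty_iff_mem_false.mpr fun o ho hmeet ↦ Set.not_disjoint_iff_nonempty_inter.mpr
      (hmeet.mono (Set.inter_subset_inter_right o sphere_subset_closedBall)) (hc o ho)
  have hsub : {o ∈ (F : Set (Set E)) | o ⊆ ball c 1} = ∅ :=
    Set.sep_eq_empty_iff_mem_false.mpr fun o ho hsub ↦ (hne o ho).ne_empty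
      ((hc o ho).eq_bot_of_le (hsub.trans ball_subset_closedBall))
  refine ⟨c, 1, one_pos, ?_, ?_, ?_⟩
  · simpa only [hinter, Set.ncard_empty, Nat.cast_zero] using hk.trans hke
  · simpa only [hsub, Set.ncard_empty, Nat.cast_zero] using mul_nonneg hC hk
  · simpa only [hsub, Set.ncard_empty, Nat.cast_zero, sub_nonpos] using hke

theorem HasDensityLE.exists_isSphereSeparator_of_two_le_finrank {F : Finset (Set E)} {ρ : ℝ}
    (h : HasDensityLE (F : Set (Set E)) ρ) (hbdd : ∀ o ∈ F, Bornology.IsBounded o)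
    (hne : ∀ o ∈ F, o.Nonempty) (hE : 2 ≤ finrank ℝ E) {k : ℕ} (hρk : ρ < 2 * k)
    (hkF : 2 * k ≤ #F) :
    ∃ c R, IsSphereSeparator (F : Set (Set E)) (4 * 36 ^ finrank ℝ E) k
      (ρ + ρ ^ (1 / (finrank ℝ E : ℝ)) * (k : ℝ) ^ (1 - 1 / (finrank ℝ E : ℝ))) c R := by
  classical
  have hρ := h.nonneg
  have : FiniteDimensional ℝ E := FiniteDimensional.of_finrank_pos (by lia)
  obtain ⟨c, R, hR, hge, hin, hstr⟩ := h.exists_sphere_card_straddles_le hbdd hne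
    (by exact_mod_cast hρk) hkF (Nat.ofNat_le_cast.mpr hE) le_rfl
  push_cast at hin hstr
  set K : ℝ := 36 ^ finrank ℝ E
  set s : ℝ := 1 / (finrank ℝ E : ℝ)
  have hs : 0 ≤ s := by positivity
  have htwo : (2 * k : ℝ) ^ (1 - s) ≤ 2 * (k : ℝ) ^ (1 - s) := by
    rw [Real.mul_rpow two_pos.le k.cast_nonneg]
    gcongr
    exact Real.rpow_le_self_of_one_le one_le_two (by linarith [hs])
  have herr : (#{o ∈ F | Straddles o c R} : ℝ) ≤ 4 * K * (ρ + ρ ^ s * (k : ℝ) ^ (1 - s)) :=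
    calc (#{o ∈ F | Straddles o c R} : ℝ)
        ≤ K * (ρ + 2 * (ρ ^ s * (2 * k : ℝ) ^ (1 - s))) := hstr
      _ ≤ K * (4 * ρ + 2 * (ρ ^ s * (2 * (k : ℝ) ^ (1 - s)))) := by gcongr; linarith
      _ = 4 * K * (ρ + ρ ^ s * (k : ℝ) ^ (1 - s)) := by ring
  have hge' : (2 * k : ℝ) ≤ #{o ∈ F | o ⊆ ball c R} + #{o ∈ F | Straddles o c R} := by
    exact_mod_cast hge
  refine ⟨c, R, hR, ?_, ?_, ?_⟩ <;> rw [ncard_sep_coe_finset]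
  · refine le_trans ?_ herr
    gcongr
    exact Straddles.of_nonempty_inter_sphere
  · nlinarith [k.cast_nonneg (α := ℝ)]
  · linarith [k.cast_nonneg (α := ℝ)]

theorem HasDensityLE.exists_isSphereSeparator_of_finrank_eq_one {F : Finset (Set E)} {ρ : ℝ}
    (h : HasDensityLE (F : Set (Set E)) ρ) (hbdd : ∀ o ∈ F, Bornology.IsBounded o)
    (hne : ∀ o ∈ F, o.Nonempty) (hE : finrank ℝ E = 1) {k : ℕ} (hρk : ρ < 2 * k)
    (hkF : 2 * k ≤ #F) :
    ∃ c R, IsSphereSeparator (F : Set (Set E)) (4 * 36 ^ 2) k (2 * ρ) c R := by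
  classical
  have hρ := h.nonneg
  have : FiniteDimensional ℝ E := FiniteDimensional.of_finrank_eq_succ hE
  obtain ⟨c, R, hR, hge, hin, hstr⟩ := h.exists_sphere_card_straddles_le hbdd hne
    (by exact_mod_cast hρk) hkF (p := 2) le_rfl (by rw [hE]; norm_num)
  rw [hE, pow_one] at hin hstr
  push_cast at hin hstr
  have hge' : (2 * k : ℝ) ≤ #{o ∈ F | o ⊆ ball c R} + #{o ∈ F | Straddles o c R} := by
    exact_mod_cast hge
  have amgm : 2 * 36 * (ρ ^ (1 / 2 : ℝ) * (2 * k : ℝ) ^ (1 - 1 / 2 : ℝ)) ≤ k + 2 * 36 ^ 2 * ρ := by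
    rw [sub_half, ← Real.sqrt_eq_rpow, ← Real.sqrt_eq_rpow]
    have := two_mul_le_add_sq (36 * √(2 * ρ)) √k
    rw [mul_pow, Real.sq_sqrt (by positivity), Real.sq_sqrt k.cast_nonneg,
      Real.sqrt_mul two_pos.le] at this
    rw [Real.sqrt_mul two_pos.le]
    linarith
  refine ⟨c, R, hR, ?_, ?_, ?_⟩ <;> rw [ncard_sep_coe_finset]
  · linarith [h.card_inter_sphere_le_of_finrank_eq_one hE c R]
  · linarith [k.cast_nonneg (α := ℝ)]
  · linarith

end NormedSpace

theorem stmt5_general (d : ℕ) (hd : 1 ≤ d) :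
    ∃ C : ℝ, 0 < C ∧
      ∀ (E : Type*) [NormedAddCommGroup E] [NormedSpace ℝ E], Module.finrank ℝ E = d →
        ∀ (O : Set (Set E)) (ρ : ℝ) (k : ℕ), O.Finite →
          (∀ o ∈ O, Bornology.IsBounded o) → (∀ o ∈ O, o.Nonempty) →
          HasDensityLE O ρ → k ≤ O.ncard →
          ∃ (c : E) (R : ℝ), IsSphereSeparator O C k
            (ρ + ρ ^ (1 / (d : ℝ)) * (k : ℝ) ^ (1 - 1 / (d : ℝ))) c R := by
  refine ⟨4 * (36 ^ d) ^ 2, by positivity, fun E _ _ hE O ρ k hO hbdd hne h hk ↦ ?_⟩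
  lift O to Finset (Set E) using hO
  have : Nontrivial E := Module.nontrivial_of_finrank_pos (R := ℝ) (by lia)
  have hρ := h.nonneg
  have hK : (1 : ℝ) ≤ 36 ^ d := one_le_pow₀ (by norm_num)
  have hC : (4 : ℝ) ≤ 4 * (36 ^ d) ^ 2 := by nlinarith
  rw [Set.ncard_coe_finset] at hk
  set e : ℝ := ρ + ρ ^ (1 / (d : ℝ)) * (k : ℝ) ^ (1 - 1 / (d : ℝ))
  have hρe : ρ ≤ e := le_add_of_nonneg_right (by positivity)
  have heC : e ≤ 4 * (36 ^ d) ^ 2 * e := le_mul_of_one_le_left (hρ.trans hρe) (by linarith)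
  obtain hdense | hρk := le_or_gt (2 * k : ℝ) ρ
  · exact exists_isSphereSeparator_of_le_mul hbdd hne (by positivity) (by positivity)
      (by linarith)
  obtain hmany | hfew := le_or_gt (2 * k) O.card
  · obtain rfl | hd₂ := hd.eq_or_lt
    · obtain ⟨c, R, hsep⟩ := h.exists_isSphereSeparator_of_finrank_eq_one hbdd hne hE hρk hmany
      have he : e = 2 * ρ := by simp [e, two_mul]
      exact ⟨c, R, by simpa only [he, pow_one] using hsep⟩
    · subst hE
      obtain ⟨c, R, hsep⟩ := h.exists_isSphereSeparator_of_two_le_finrank hbdd hne hd₂ hρk hmany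
      exact ⟨c, R, hsep.mono (by nlinarith) k.cast_nonneg (hρ.trans hρe)⟩
  · have hfew' : (O.card : ℝ) ≤ 2 * k := by exact_mod_cast hfew.le
    exact ⟨0, exists_isSphereSeparator_of_card_le_mul hbdd 0 (by positivity) (hρ.trans hρe)
      (by exact_mod_cast hk) (hfew'.trans (by gcongr; linarith))⟩

/-- separator theorem for low-density families.  There is a constant
`C = C(d)` so that for every family of `n` objects of density `ρ` and every `1 ≤ k ≤ n`,
there is a sphere intersecting at most `C(ρ + ρ^{1/d} k^{1-1/d})` objects, with at most
`C·k` objects strictly inside it and at least `k - C(ρ + ρ^{1/d} k^{1-1/d})` objects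
strictly inside it. -/
theorem stmt5 (d : ℕ) (hd : 1 ≤ d) :
    ∃ C : ℝ, 0 < C ∧
      ∀ (O : Set (Set (EuclideanSpace ℝ (Fin d)))) (ρ : ℝ) (n k : ℕ),
        O.Finite → O.ncard = n →
        (∀ o ∈ O, Bornology.IsBounded o) → (∀ o ∈ O, o.Nonempty) →
        FamilyDensityLE d O ρ → 1 ≤ k → k ≤ n →
        ∃ (c : EuclideanSpace ℝ (Fin d)) (R : ℝ), 0 < R ∧
          (({o ∈ O | (o ∩ Metric.sphere c R).Nonempty}.ncard : ℝ)
              ≤ C * (ρ + ρ ^ (1 / (d : ℝ)) * (k : ℝ) ^ (1 - 1 / (d : ℝ)))) ∧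
          (({o ∈ O | o ⊆ Metric.ball c R}.ncard : ℝ) ≤ C * (k : ℝ)) ∧
          ((k : ℝ) - C * (ρ + ρ ^ (1 / (d : ℝ)) * (k : ℝ) ^ (1 - 1 / (d : ℝ)))
              ≤ ({o ∈ O | o ⊆ Metric.ball c R}.ncard : ℝ)) := by
  obtain ⟨C, hC, hsep⟩ := stmt5_general d hd
  refine ⟨C, hC, fun O ρ n k hO hn hbdd hne hρ _ hkn ↦ ?_⟩
  obtain ⟨c, R, h⟩ := hsep _ finrank_euclideanSpace_fin O ρ k hO hbdd hne hρ (hn ▸ hkn)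
  exact ⟨c, R, h.radius_pos, h.ncard_inter_le, h.ncard_subset_le, h.le_ncard_subset⟩
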